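/- Almost-additivity of logarithm increments of a controlled rough path (Euclidean version): Let X = (x, 𝕏) be a weak-geometric p-rough path with control ω on [0,T], let (z, z†) be an ℝ^d-valued rough path controlled by X on [0,T], let ψ be a local logarithm on ℝ^d with open domain D, and let W₀ ⊆ ℝ^d be an open convex set with z([0,T]) ⊆ W₀ and W₀ × W₀ ⊆ D. Then there exists C < ∞ such that for all 0 ≤ s ≤ t ≤ u ≤ T, |ψ(z_t, z_u) − D₂ψ(z_t, z_s)[ψ(z_s, z_u) − ψ(z_s, z_t)]| ≤ C ω(s,u)^{3/p}. -/

import Mathlib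

noncomputable section

open scoped BigOperators

/-- `ℝ^n` with the Euclidean norm. -/
abbrev Euc (n : ℕ) : Type := EuclideanSpace ℝ (Fin n)

/-- The `i`-th standard basis vector of `ℝ^n`. -/
def eb {n : ℕ} (i : Fin n) : Euc n := EuclideanSpace.single i 1

/-- Tensor product of two Euclidean vectors, realized in `ℝ^{n×m}` with the Euclidean norm. -/
def tensorE {n m : ℕ} (v : Euc n) (w : Euc m) : EuclideanSpace ℝ (Fin n × Fin m) :=
  (EuclideanSpace.equiv (Fin n × Fin m) ℝ).symm fun p => v p.1 * w p.2

/-- Application of the (unique) linear extension of a bilinear map `B` to a tensor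
`X ∈ ℝ^n ⊗ ℝ^m ≅ ℝ^{n × m}`. -/
def tapply {n m : ℕ} {V : Type*} [NormedAddCommGroup V] [NormedSpace ℝ V]
    (B : Euc n → Euc m → V) (X : EuclideanSpace ℝ (Fin n × Fin m)) : V :=
  ∑ q : Fin n × Fin m, X q • B (eb q.1) (eb q.2)
/-- `ω` is a control on the simplex `{(s,t) : 0 ≤ s ≤ t ≤ T}`. -/
structure IsControl (T : ℝ) (ω : ℝ → ℝ → ℝ) : Prop where
  cont : ContinuousOn (fun q : ℝ × ℝ => ω q.1 q.2)
    {q : ℝ × ℝ | 0 ≤ q.1 ∧ q.1 ≤ q.2 ∧ q.2 ≤ T}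
  nonneg : ∀ ⦃s t : ℝ⦄, 0 ≤ s → s ≤ t → t ≤ T → 0 ≤ ω s t
  zero : ∀ ⦃s : ℝ⦄, 0 ≤ s → s ≤ T → ω s s = 0
  superadditive : ∀ ⦃s t u : ℝ⦄, 0 ≤ s → s ≤ t → t ≤ u → u ≤ T → ω s t + ω t u ≤ ω s u
/-- `(x, XX)` is a `p`-rough path with control `ω` on `[0,T]`. -/
structure IsRoughPath (T p : ℝ) {k : ℕ} (ω : ℝ → ℝ → ℝ)
    (x : ℝ → Euc k) (XX : ℝ → ℝ → EuclideanSpace ℝ (Fin k × Fin k)) : Prop where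
  cont_x : ContinuousOn x (Set.Icc 0 T)
  cont_XX : ContinuousOn (fun q : ℝ × ℝ => XX q.1 q.2)
    {q : ℝ × ℝ | 0 ≤ q.1 ∧ q.1 ≤ q.2 ∧ q.2 ≤ T}
  chen : ∀ ⦃s t u : ℝ⦄, 0 ≤ s → s ≤ t → t ≤ u → u ≤ T →
    XX s u = XX s t + XX t u + tensorE (x t - x s) (x u - x t)
  bound_x : ∀ ⦃s t : ℝ⦄, 0 ≤ s → s ≤ t → t ≤ T → ‖x t - x s‖ ≤ ω s t ^ (1 / p)
  bound_XX : ∀ ⦃s t : ℝ⦄, 0 ≤ s → s ≤ t → t ≤ T → ‖XX s t‖ ≤ ω s t ^ (2 / p)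
/-- The rough path `(x, XX)` is weak-geometric: the symmetric part of `XX s t` is
`(1/2) x_{s,t} ⊗ x_{s,t}`. -/
def IsWeakGeometric (T : ℝ) {k : ℕ} (x : ℝ → Euc k)
    (XX : ℝ → ℝ → EuclideanSpace ℝ (Fin k × Fin k)) : Prop :=
  ∀ ⦃s t : ℝ⦄, 0 ≤ s → s ≤ t → t ≤ T → ∀ i j : Fin k,
    XX s t (i, j) + XX s t (j, i) = (x t - x s) i * (x t - x s) j
/-- `(y, y')` is a `V`-valued rough path controlled by `X = (x, ·)` (with control `ω`)
on the interval `[a, b]`. -/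
def IsCRP (p : ℝ) {k : ℕ} (ω : ℝ → ℝ → ℝ) (x : ℝ → Euc k)
    {V : Type*} [NormedAddCommGroup V] [NormedSpace ℝ V]
    (a b : ℝ) (y : ℝ → V) (y' : ℝ → Euc k →L[ℝ] V) : Prop :=
  ContinuousOn y (Set.Icc a b) ∧ ContinuousOn y' (Set.Icc a b) ∧
    ∃ C : ℝ, ∀ ⦃s t : ℝ⦄, a ≤ s → s ≤ t → t ≤ b →
      ‖y t - y s - y' s (x t - x s)‖ ≤ C * ω s t ^ (2 / p) ∧
      ‖y' t - y' s‖ ≤ C * ω s t ^ (1 / p)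
/-- `ψ` is a local logarithm on `ℝ^d` with open domain `D`. -/
structure IsLocalLog {d : ℕ} (D : Set (Euc d × Euc d)) (ψ : Euc d × Euc d → Euc d) : Prop where
  open_dom : IsOpen D
  smooth : ContDiffOn ℝ (⊤ : ℕ∞) ψ D
  diag_zero : ∀ x : Euc d, (x, x) ∈ D → ψ (x, x) = 0
  diag_deriv : ∀ x : Euc d, (x, x) ∈ D →
    fderiv ℝ (fun w => ψ (x, w)) x = ContinuousLinearMap.id ℝ (Euc d)

/-!
Write `L = D₂ψ`. On the diagonal `L(a, a) = 1`, so `L(b, y) - L(b, a) L(a, y)` is the rectangular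
increment of `L` over `{a, b} × {a, y}` minus the product of the increments `L(b, a) - 1` and
`L(a, y) - 1`; hence it is `O(‖b - a‖ ‖y - a‖)`. This is the derivative in `y` of
`ψ(b, y) - L(b, a) ψ(a, y)`, and since `ψ(b, b) = 0` the mean value inequality on the segment
`[b, c]` bounds `ψ(b, c) - L(b, a) (ψ(a, c) - ψ(a, b))` by a cubic expression in the distances
between `a`, `b`, `c`, uniformly on compact convex sets; the closed convex hull of a compact
subset of an open convex set is one inside that set. A controlled path has increments of order
`ω ^ (1 / p)`, so inserting `a = z s`, `b = z t`, `c = z u` gives `ω ^ (3 / p)`.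
-/

open Set Metric
open scoped NNReal

lemma exists_isCompact_convex_between {E : Type*} [NormedAddCommGroup E] [NormedSpace ℝ E]
    [CompleteSpace E] {S W : Set E} (hS : IsCompact S) (hWo : IsOpen W) (hWc : Convex ℝ W)
    (hSW : S ⊆ W) : ∃ K, IsCompact K ∧ Convex ℝ K ∧ S ⊆ K ∧ K ⊆ W := by
  obtain ⟨δ, hδ, hδW⟩ := hS.exists_thickening_subset_open hWo hSW
  refine ⟨closure (convexHull ℝ S), ?_, (convex_convexHull ℝ S).closure,
    (subset_convexHull ℝ S).trans subset_closure, ?_⟩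
  · exact hS.totallyBounded.convexHull.closure.isCompact_of_isClosed isClosed_closure
  · calc closure (convexHull ℝ S) ⊆ thickening δ (convexHull ℝ S) := closure_subset_thickening hδ _
      _ = convexHull ℝ (thickening δ S) := by
        rw [← add_ball_zero, ← add_ball_zero, convexHull_add, (convex_ball 0 δ).convexHull_eq]
      _ ⊆ W := convexHull_min hδW hWc

section PartialDerivative

variable {E F G : Type*} [NormedAddCommGroup E] [NormedSpace ℝ E] [NormedAddCommGroup F]
  [NormedSpace ℝ F] [NormedAddCommGroup G] [NormedSpace ℝ G]

/-- The partial derivative `D₂f` of a function of two variables in its second variable. -/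
def fderivSnd (f : E × F → G) (q : E × F) : F →L[ℝ] G :=
  fderiv ℝ (fun w => f (q.1, w)) q.2

variable {f : E × F → G} {U : Set (E × F)}

lemma hasFDerivAt_fderivSnd {a : E} {y : F} (hf : DifferentiableAt ℝ f (a, y)) :
    HasFDerivAt (fun w => f (a, w)) (fderivSnd f (a, y)) y :=
  (hf.comp y (hasFDerivAt_prodMk_right a y).differentiableAt).hasFDerivAt

lemma contDiffOn_fderivSnd {m n : WithTop ℕ∞} (hU : IsOpen U) (hf : ContDiffOn ℝ n f U)
    (hmn : m + 1 ≤ n) : ContDiffOn ℝ m (fderivSnd f) U := fun q hq =>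
  have hfq : ContDiffAt ℝ n (fun v : (E × F) × F => f (v.1.1, v.2)) (q, q.2) :=
    ContDiffAt.comp (q, q.2) (hf.contDiffAt (hU.mem_nhds hq))
      (contDiffAt_fst.fst.prodMk contDiffAt_snd)
  (ContDiffAt.fderiv hfq contDiffAt_snd hmn).contDiffWithinAt

lemma exists_norm_rectangular_increment_le (hU : IsOpen U) (hf : ContDiffOn ℝ 2 f U)
    {K : Set E} {K' : Set F} (hK : IsCompact K) (hKc : Convex ℝ K) (hK' : IsCompact K')
    (hKc' : Convex ℝ K') (hKU : K ×ˢ K' ⊆ U) :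
    ∃ M : ℝ≥0, ∀ a ∈ K, ∀ b ∈ K, ∀ c ∈ K', ∀ d ∈ K',
      ‖(f (b, d) - f (a, d)) - (f (b, c) - f (a, c))‖ ≤ M * ‖b - a‖ * ‖d - c‖ := by
  have hD₂f : ContDiffOn ℝ 1 (fderivSnd f) U := contDiffOn_fderivSnd hU hf one_add_one_eq_two.le
  obtain ⟨M, hM⟩ :=
    (hD₂f.mono hKU).exists_lipschitzOnWith one_ne_zero (hKc.prod hKc') (hK.prod hK')
  have hderiv {e : E} (he : e ∈ K) {y : F} (hy : y ∈ K') :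
      HasFDerivAt (fun w => f (e, w)) (fderivSnd f (e, y)) y :=
    hasFDerivAt_fderivSnd <|
      (hf.differentiableOn two_ne_zero).differentiableAt (hU.mem_nhds (hKU ⟨he, hy⟩))
  refine ⟨M, fun a ha b hb c hc d hd => ?_⟩
  have hbound : ∀ y ∈ K', ‖fderivSnd f (b, y) - fderivSnd f (a, y)‖ ≤ M * ‖b - a‖ := by
    intro y hy
    simpa [Prod.norm_def] using hM.norm_sub_le (mk_mem_prod hb hy) (mk_mem_prod ha hy)
  exact hKc'.norm_image_sub_le_of_norm_hasFDerivWithin_le (f := fun y => f (b, y) - f (a, y))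
    (fun y hy => ((hderiv hb hy).sub (hderiv ha hy)).hasFDerivWithinAt) hbound hc hd

end PartialDerivative

section LocalLogarithm

variable {E : Type*} [NormedAddCommGroup E] [NormedSpace ℝ E] {ψ : E × E → E} {K W : Set E}

lemma exists_norm_fderivSnd_sub_comp_le (hWo : IsOpen W) (hψ : ContDiffOn ℝ 3 ψ (W ×ˢ W))
    (hone : ∀ a ∈ W, fderivSnd ψ (a, a) = .id ℝ E)
    (hK : IsCompact K) (hKc : Convex ℝ K) (hKW : K ⊆ W) :
    ∃ M : ℝ≥0, ∀ a ∈ K, ∀ b ∈ K, ∀ y ∈ K,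
      ‖fderivSnd ψ (b, y) - (fderivSnd ψ (b, a)).comp (fderivSnd ψ (a, y))‖
        ≤ M * ‖b - a‖ * ‖y - a‖ := by
  have hKK : K ×ˢ K ⊆ W ×ˢ W := prod_mono hKW hKW
  have hL : ContDiffOn ℝ 2 (fderivSnd ψ) (W ×ˢ W) :=
    contDiffOn_fderivSnd (hWo.prod hWo) hψ two_add_one_eq_three.le
  obtain ⟨M, hM⟩ := exists_norm_rectangular_increment_le (hWo.prod hWo) hL hK hKc hK hKc hKK
  obtain ⟨N, hN⟩ :=
    (hL.mono hKK).exists_lipschitzOnWith two_ne_zero (hKc.prod hKc) (hK.prod hK)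
  refine ⟨M + N * N, fun a ha b hb y hy => ?_⟩
  set L := fderivSnd ψ
  have hLa : L (a, a) = .id ℝ E := hone a (hKW ha)
  have hfst : ‖L (b, a) - .id ℝ E‖ ≤ N * ‖b - a‖ := by
    simpa [Prod.norm_def, hLa] using hN.norm_sub_le (mk_mem_prod hb ha) (mk_mem_prod ha ha)
  have hsnd : ‖L (a, y) - .id ℝ E‖ ≤ N * ‖y - a‖ := by
    simpa [Prod.norm_def, hLa] using hN.norm_sub_le (mk_mem_prod ha hy) (mk_mem_prod ha ha)
  have hsplit : L (b, y) - (L (b, a)).comp (L (a, y)) =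
      (L (b, y) - L (a, y) - (L (b, a) - L (a, a)))
        - (L (b, a) - .id ℝ E).comp (L (a, y) - .id ℝ E) := by
    rw [hLa]
    ext v
    simp only [sub_apply, ContinuousLinearMap.comp_apply, ContinuousLinearMap.id_apply, map_sub]
    abel
  calc ‖L (b, y) - (L (b, a)).comp (L (a, y))‖
      ≤ ‖L (b, y) - L (a, y) - (L (b, a) - L (a, a))‖
          + ‖L (b, a) - .id ℝ E‖ * ‖L (a, y) - .id ℝ E‖ := by
        rw [hsplit]
        grw [norm_sub_le, ContinuousLinearMap.opNorm_comp_le]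
    _ ≤ M * ‖b - a‖ * ‖y - a‖ + N * ‖b - a‖ * (N * ‖y - a‖) := by
        gcongr
        exact hM a ha b hb a ha y hy
    _ = ↑(M + N * N) * ‖b - a‖ * ‖y - a‖ := by push_cast; ring

lemma exists_norm_log_sub_fderivSnd_le (hWo : IsOpen W) (hψ : ContDiffOn ℝ 3 ψ (W ×ˢ W))
    (hzero : ∀ a ∈ W, ψ (a, a) = 0) (hone : ∀ a ∈ W, fderivSnd ψ (a, a) = .id ℝ E)
    (hK : IsCompact K) (hKc : Convex ℝ K) (hKW : K ⊆ W) :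
    ∃ M : ℝ≥0, ∀ a ∈ K, ∀ b ∈ K, ∀ c ∈ K,
      ‖ψ (b, c) - fderivSnd ψ (b, a) (ψ (a, c) - ψ (a, b))‖
        ≤ M * ‖b - a‖ * max ‖b - a‖ ‖c - a‖ * ‖c - b‖ := by
  obtain ⟨M, hM⟩ := exists_norm_fderivSnd_sub_comp_le hWo hψ hone hK hKc hKW
  refine ⟨M, fun a ha b hb c hc => ?_⟩
  set L := fderivSnd ψ
  set r := max ‖b - a‖ ‖c - a‖
  have hderiv {e y : E} (he : e ∈ K) (hy : y ∈ K) :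
      HasFDerivAt (fun w => ψ (e, w)) (L (e, y)) y :=
    hasFDerivAt_fderivSnd <| (hψ.differentiableOn three_ne_zero).differentiableAt
      ((hWo.prod hWo).mem_nhds ⟨hKW he, hKW hy⟩)
  have hsegK : segment ℝ b c ⊆ K := hKc.segment_subset hb hc
  have hsegr : segment ℝ b c ⊆ closedBall a r :=
    (convex_closedBall a r).segment_subset (mem_closedBall_iff_norm.2 (le_max_left _ _))
      (mem_closedBall_iff_norm.2 (le_max_right _ _))
  have hbound : ∀ y ∈ segment ℝ b c,
      ‖L (b, y) - (L (b, a)).comp (L (a, y))‖ ≤ M * ‖b - a‖ * r := by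
    intro y hy
    grw [hM a ha b hb y (hsegK hy), mem_closedBall_iff_norm.1 (hsegr hy)]
  have hmv := (convex_segment b c).norm_image_sub_le_of_norm_hasFDerivWithin_le
    (f := fun y => ψ (b, y) - L (b, a) (ψ (a, y)))
    (fun y hy => ((hderiv hb (hsegK hy)).sub
      ((L (b, a)).hasFDerivAt.comp y (hderiv ha (hsegK hy)))).hasFDerivWithinAt)
    hbound (left_mem_segment ℝ b c) (right_mem_segment ℝ b c)
  calc ‖ψ (b, c) - L (b, a) (ψ (a, c) - ψ (a, b))‖
      = ‖(ψ (b, c) - L (b, a) (ψ (a, c))) - (ψ (b, b) - L (b, a) (ψ (a, b)))‖ := by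
        rw [hzero b (hKW hb), map_sub]
        congr 1
        abel
    _ ≤ M * ‖b - a‖ * r * ‖c - b‖ := hmv

end LocalLogarithm

section Path

variable {T p : ℝ} {ω : ℝ → ℝ → ℝ}

lemma IsControl.mono (hω : IsControl T ω) ⦃s' s t t' : ℝ⦄ (hs' : 0 ≤ s') (hs : s' ≤ s)
    (hst : s ≤ t) (ht : t ≤ t') (ht' : t' ≤ T) : ω s t ≤ ω s' t' := by
  have hsplit_s := hω.superadditive hs' hs (hst.trans ht) ht'
  have hsplit_t := hω.superadditive (hs'.trans hs) hst ht ht'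
  have hnonneg_s := hω.nonneg hs' hs (by linarith)
  have hnonneg_t := hω.nonneg (by linarith : 0 ≤ t) ht ht'
  linarith

lemma IsControl.continuousOn_of_norm_sub_le {E : Type*} [SeminormedAddCommGroup E] {z : ℝ → E}
    {R : ℝ} (hω : IsControl T ω) (hp : 0 < p)
    (hz : ∀ ⦃s t : ℝ⦄, 0 ≤ s → s ≤ t → t ≤ T → ‖z t - z s‖ ≤ R * ω s t ^ (1 / p)) :
    ContinuousOn z (Icc 0 T) := by
  intro s hs
  have hωcont : ContinuousOn (fun t => ω (min s t) (max s t)) (Icc 0 T) :=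
    hω.cont.comp (f := fun t => (min s t, max s t)) (by fun_prop)
      fun t ht => ⟨le_min hs.1 ht.1, min_le_max, max_le hs.2 ht.2⟩
  have hbound : ∀ t ∈ Icc 0 T, ‖z t - z s‖ ≤ R * ω (min s t) (max s t) ^ (1 / p) := by
    intro t ht
    rcases le_total s t with hst | hts
    · simpa only [min_eq_left hst, max_eq_right hst] using hz hs.1 hst ht.2
    · simpa only [min_eq_right hts, max_eq_left hts, norm_sub_rev (z t)] using hz ht.1 hts hs.2
  have hlim := ((hωcont s hs).rpow_const (.inr (one_div_pos.2 hp).le)).const_mul R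
  simp only [ContinuousWithinAt, min_self, max_self, hω.zero hs.1 hs.2,
    Real.zero_rpow (one_div_pos.2 hp).ne', mul_zero] at hlim
  exact tendsto_iff_norm_sub_tendsto_zero.2 <| squeeze_zero' (.of_forall fun _ => norm_nonneg _)
    (eventually_nhdsWithin_of_forall hbound) hlim

lemma IsCRP.exists_norm_sub_le {k : ℕ} {x : ℝ → Euc k} {V : Type*} [NormedAddCommGroup V]
    [NormedSpace ℝ V] {z : ℝ → V} {z' : ℝ → Euc k →L[ℝ] V} (hz : IsCRP p ω x 0 T z z')
    (hω : IsControl T ω) (hT : 0 ≤ T) (hp : 0 ≤ p)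
    (hx : ∀ ⦃s t : ℝ⦄, 0 ≤ s → s ≤ t → t ≤ T → ‖x t - x s‖ ≤ ω s t ^ (1 / p)) :
    ∃ R : ℝ≥0, ∀ ⦃s t : ℝ⦄, 0 ≤ s → s ≤ t → t ≤ T → ‖z t - z s‖ ≤ R * ω s t ^ (1 / p) := by
  obtain ⟨-, hz'cont, C, hC⟩ := hz
  obtain ⟨B, hB⟩ := isCompact_Icc.exists_bound_of_continuousOn hz'cont
  have hω₀ : 0 ≤ ω 0 T := hω.nonneg le_rfl hT le_rfl
  refine ⟨⟨|C| * ω 0 T ^ (1 / p) + |B|, by positivity⟩, fun s t hs hst ht => ?_⟩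
  have hωst : 0 ≤ ω s t := hω.nonneg hs hst ht
  have hremainder : ω s t ^ (2 / p) ≤ ω 0 T ^ (1 / p) * ω s t ^ (1 / p) := by
    rw [show 2 / p = 1 / p + 1 / p by ring, Real.rpow_add_of_nonneg hωst (by positivity)
      (by positivity)]
    gcongr
    exact hω.mono le_rfl hs hst ht le_rfl
  calc ‖z t - z s‖ ≤ ‖z t - z s - z' s (x t - x s)‖ + ‖z' s (x t - x s)‖ :=
        norm_le_norm_sub_add _ _
    _ ≤ C * ω s t ^ (2 / p) + ‖z' s‖ * ‖x t - x s‖ :=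
        add_le_add (hC hs hst ht).1 ((z' s).le_opNorm _)
    _ ≤ |C| * (ω 0 T ^ (1 / p) * ω s t ^ (1 / p)) + |B| * ω s t ^ (1 / p) := by
        gcongr
        · exact le_abs_self C
        · exact (hB s ⟨hs, hst.trans ht⟩).trans (le_abs_self B)
        · exact hx hs hst ht
    _ = (|C| * ω 0 T ^ (1 / p) + |B|) * ω s t ^ (1 / p) := by ring

theorem log_increments_almost_additive_general {E : Type*} [NormedAddCommGroup E]
    [NormedSpace ℝ E] [CompleteSpace E] (hp : 0 < p) (hω : IsControl T ω) {z : ℝ → E} {R : ℝ≥0}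
    (hz : ∀ ⦃s t : ℝ⦄, 0 ≤ s → s ≤ t → t ≤ T → ‖z t - z s‖ ≤ R * ω s t ^ (1 / p))
    {W : Set E} (hWo : IsOpen W) (hWc : Convex ℝ W) (hzW : ∀ s ∈ Icc 0 T, z s ∈ W)
    {ψ : E × E → E} (hψ : ContDiffOn ℝ 3 ψ (W ×ˢ W)) (hzero : ∀ a ∈ W, ψ (a, a) = 0)
    (hone : ∀ a ∈ W, fderivSnd ψ (a, a) = .id ℝ E) :
    ∃ C : ℝ, ∀ ⦃s t u : ℝ⦄, 0 ≤ s → s ≤ t → t ≤ u → u ≤ T →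
      ‖ψ (z t, z u) - fderivSnd ψ (z t, z s) (ψ (z s, z u) - ψ (z s, z t))‖
        ≤ C * ω s u ^ (3 / p) := by
  have hcont : ContinuousOn z (Icc 0 T) := hω.continuousOn_of_norm_sub_le hp hz
  obtain ⟨K, hK, hKc, hzK, hKW⟩ := exists_isCompact_convex_between
    (isCompact_Icc.image_of_continuousOn hcont) hWo hWc (image_subset_iff.2 hzW)
  obtain ⟨M, hM⟩ := exists_norm_log_sub_fderivSnd_le hWo hψ hzero hone hK hKc hKW
  refine ⟨M * R ^ 3, fun s t u hs hst htu hu => ?_⟩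
  have hmem {v : ℝ} (hsv : s ≤ v) (hvu : v ≤ u) : z v ∈ K :=
    hzK (mem_image_of_mem z ⟨hs.trans hsv, hvu.trans hu⟩)
  have hωsu : 0 ≤ ω s u := hω.nonneg hs (hst.trans htu) hu
  set ρ := R * ω s u ^ (1 / p)
  have hincr ⦃v w : ℝ⦄ (hsv : s ≤ v) (hvw : v ≤ w) (hwu : w ≤ u) : ‖z w - z v‖ ≤ ρ := by
    grw [hz (hs.trans hsv) hvw (hwu.trans hu), Real.rpow_le_rpow
      (hω.nonneg (hs.trans hsv) hvw (hwu.trans hu)) (hω.mono hs hsv hvw hwu hu) (by positivity)]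
  calc ‖ψ (z t, z u) - fderivSnd ψ (z t, z s) (ψ (z s, z u) - ψ (z s, z t))‖
      ≤ M * ‖z t - z s‖ * max ‖z t - z s‖ ‖z u - z s‖ * ‖z u - z t‖ :=
        hM _ (hmem le_rfl (hst.trans htu)) _ (hmem hst htu) _ (hmem (hst.trans htu) le_rfl)
    _ ≤ M * ρ * ρ * ρ := by
        gcongr
        exacts [hincr le_rfl hst htu, max_le (hincr le_rfl hst htu)
          (hincr le_rfl (hst.trans htu) le_rfl), hincr hst htu le_rfl]
    _ = M * R ^ 3 * ω s u ^ (3 / p) := by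
        rw [show 3 / p = 1 / p * (3 : ℕ) by push_cast; ring, Real.rpow_mul_natCast hωsu]
        ring

end Path

/-- **Almost-additivity of logarithm increments of a controlled rough path**
(Euclidean version of Corollary 3.29 of Driver–Semko). -/
theorem log_increments_almost_additive
    {T p : ℝ} (hT : 0 < T) (hp1 : 1 ≤ p) (hp3 : p < 3) {k : ℕ} (hk : 1 ≤ k)
    {ω : ℝ → ℝ → ℝ} (hω : IsControl T ω)
    {x : ℝ → Euc k} {XX : ℝ → ℝ → EuclideanSpace ℝ (Fin k × Fin k)}
    (hX : IsRoughPath T p ω x XX) (hgeo : IsWeakGeometric T x XX)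
    {d : ℕ} {z : ℝ → Euc d} {z' : ℝ → Euc k →L[ℝ] Euc d}
    (hz : IsCRP p ω x 0 T z z')
    {D : Set (Euc d × Euc d)} {ψ : Euc d × Euc d → Euc d} (hψ : IsLocalLog D ψ)
    {W₀ : Set (Euc d)} (hW₀open : IsOpen W₀) (hW₀conv : Convex ℝ W₀)
    (hzW : ∀ s ∈ Set.Icc (0 : ℝ) T, z s ∈ W₀) (hWD : W₀ ×ˢ W₀ ⊆ D) :
    ∃ C : ℝ, ∀ ⦃s t u : ℝ⦄, 0 ≤ s → s ≤ t → t ≤ u → u ≤ T →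
      ‖ψ (z t, z u) -
          fderiv ℝ (fun w => ψ (z t, w)) (z s) (ψ (z s, z u) - ψ (z s, z t))‖
        ≤ C * ω s u ^ (3 / p) := by
  obtain ⟨R, hR⟩ := hz.exists_norm_sub_le hω hT.le (by positivity) hX.bound_x
  exact log_increments_almost_additive_general (by positivity) hω hR hW₀open hW₀conv hzW
    ((hψ.smooth.mono hWD).of_le (by norm_cast))
    (fun a ha => hψ.diag_zero a (hWD ⟨ha, ha⟩)) (fun a ha => hψ.diag_deriv a (hWD ⟨ha, ha⟩))
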